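/- arXiv:1305.4714 — 2 statements merged into one kernel-verified Lean document; each statement's English description precedes it below -/
import Mathlib

section
/- (Uniform momentum-derivative estimate for the rescaled flow) Assume Assumption C and fix T > 0. For λ ≥ 1, let (x^λ, ξ^λ) : ℝ → ℝ^d × ℝ^d solve the Hamilton equations for p^λ(x,ξ) = k(x,ξ) + λ^{−2}V(x) with initial data (x₀,ξ₀), ξ₀ ≠ 0. Suppose there exist λ₀ ≥ 1 and c, C, M > 0 such that |x^λ(t)| ≥ c|t| − C and |ξ^λ(t)| ≤ M for all |t| ≤ λT and λ ≥ λ₀. Then there exists C' > 0, independent of λ, such that |(ξ^λ)'(t)| ≤ C'⟨t⟩^{−1−μ} for all |t| ≤ λT and λ ≥ λ₀. -/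
open Filter MeasureTheory
open scoped Topology BigOperators

noncomputable section

abbrev E (d : ℕ) := EuclideanSpace ℝ (Fin d)

/-- Japanese bracket `⟨x⟩ = (1+|x|²)^{1/2}`. -/
def jap {d : ℕ} (x : E d) : ℝ := Real.sqrt (1 + ‖x‖ ^ 2)

/-- Japanese bracket of a real number. -/
def japr (t : ℝ) : ℝ := Real.sqrt (1 + t ^ 2)

/-- The kinetic energy symbol `k(x,ξ) = (1/2) Σ a_{mn}(x) ξ_m ξ_n`. -/
def kk {d : ℕ} (a : Fin d → Fin d → E d → ℝ) (x ξ : E d) : ℝ :=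
  (1 / 2) * ∑ m : Fin d, ∑ n : Fin d, a m n x * ξ m * ξ n

/-- `(y, η)` solves the Hamilton equations for the Hamiltonian `h`. -/
def IsHamiltonSol {d : ℕ} (h : E d → E d → ℝ) (y η : ℝ → E d) : Prop :=
  ∀ t : ℝ, HasDerivAt y (gradient (h (y t)) (η t)) t ∧
    HasDerivAt η (-gradient (fun x => h x (η t)) (y t)) t

/-- Assumption C (with long range exponent `μ` and short range exponent `ν`). -/
def AssumptionC {d : ℕ} (μ ν : ℝ) (a : Fin d → Fin d → E d → ℝ) (VL VS : E d → ℝ) : Prop :=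
  (∀ m n, ContDiff ℝ (⊤ : ℕ∞) (a m n)) ∧
  (∀ m n x, a m n x = a n m x) ∧
  (∀ (x ξ : E d), ξ ≠ 0 → 0 < ∑ m : Fin d, ∑ n : Fin d, a m n x * ξ m * ξ n) ∧
  (∀ m n (j : ℕ), ∃ C > 0, ∀ x : E d,
    ‖iteratedFDeriv ℝ j (fun z => a m n z - if m = n then (1 : ℝ) else 0) x‖
      ≤ C * jap x ^ (-μ - (j : ℝ))) ∧
  ContDiff ℝ (⊤ : ℕ∞) VL ∧ ContDiff ℝ (⊤ : ℕ∞) VS ∧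
  (∀ j : ℕ, ∃ C > 0, ∀ x : E d,
    ‖iteratedFDeriv ℝ j VL x‖ ≤ C * jap x ^ (2 - μ - (j : ℝ))) ∧
  (∀ j : ℕ, ∃ C > 0, ∀ x : E d,
    ‖iteratedFDeriv ℝ j VS x‖ ≤ C * jap x ^ (2 - ν - (j : ℝ)))

/-!
Since `|ξ|` and the coefficients are bounded, `|x'|` is bounded, so together with the assumed escape
`|x(t)| ≥ c|t| - C` the brackets `⟨x(t)⟩` and `⟨t⟩` are comparable and every power of one is
bounded by the same power of the other. In `ξ' = -∂ₓk - λ⁻² ∇V` the kinetic term is thus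
`O(⟨t⟩^{-1-μ})`, and the potential term is `O(λ⁻² ⟨t⟩^{1-μ})`; the time restriction `|t| ≤ λT` says
`λ⁻² = O(⟨t⟩⁻²)`, which turns growth into decay. The short range part obeys the long range bound
because `μ ≤ 1 < ν`.
-/

theorem rpow_le_rpow_abs_mul_rpow {p q K : ℝ} (hp : 0 < p) (hq : 0 < q) (hpq : p ≤ K * q)
    (hqp : q ≤ K * p) (s : ℝ) : p ^ s ≤ K ^ |s| * q ^ s := by
  have hK : 0 < K := pos_of_mul_pos_left (hp.trans_le hpq) hq.le
  rcases le_total 0 s with hs | hs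
  · rw [abs_of_nonneg hs, ← Real.mul_rpow hK.le hq.le]
    exact Real.rpow_le_rpow hp.le hpq hs
  · calc p ^ s = K ^ |s| * (K * p) ^ s := by
          rw [abs_of_nonpos hs, Real.mul_rpow hK.le hp.le, ← mul_assoc, ← Real.rpow_add hK,
            neg_add_cancel, Real.rpow_zero, one_mul]
      _ ≤ K ^ |s| * q ^ s :=
          mul_le_mul_of_nonneg_left (Real.rpow_le_rpow_of_nonpos hq hqp hs) (by positivity)

theorem exists_nonneg_forall_sum_sum_le {ι κ α : Type*} [Fintype ι] [Fintype κ]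
    {f : ι → κ → α → ℝ} {g : α → ℝ} (h : ∀ i j, ∃ C > 0, ∀ x, f i j x ≤ C * g x) :
    ∃ C ≥ 0, ∀ x, ∑ i, ∑ j, f i j x ≤ C * g x := by
  choose C hC hfg using h
  refine ⟨∑ i, ∑ j, C i j,
    Finset.sum_nonneg fun i _ => Finset.sum_nonneg fun j _ => (hC i j).le, fun x => ?_⟩
  simp only [Finset.sum_mul]
  exact Finset.sum_le_sum fun i _ => Finset.sum_le_sum fun j _ => hfg i j x

theorem norm_le_norm_zero_add_mul_abs {F : Type*} [NormedAddCommGroup F] [NormedSpace ℝ F]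
    {f f' : ℝ → F} {B τ : ℝ} (hf : ∀ s, |s| ≤ τ → HasDerivAt f (f' s) s)
    (hB : ∀ s, |s| ≤ τ → ‖f' s‖ ≤ B) {t : ℝ} (ht : |t| ≤ τ) :
    ‖f t‖ ≤ ‖f 0‖ + B * |t| := by
  have hτ : 0 ≤ τ := (abs_nonneg t).trans ht
  have hinc : ‖f t - f 0‖ ≤ B * ‖t - 0‖ :=
    (convex_Icc (-τ) τ).norm_image_sub_le_of_norm_hasDerivWithin_le
      (fun s hs => (hf s (abs_le.mpr hs)).hasDerivWithinAt) (fun s hs => hB s (abs_le.mpr hs))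
      ⟨neg_nonpos.mpr hτ, hτ⟩ (abs_le.mp ht)
  rw [sub_zero, Real.norm_eq_abs] at hinc
  linarith [norm_le_insert' (f t) (f 0)]

theorem norm_gradient {𝕜 F : Type*} [RCLike 𝕜] [NormedAddCommGroup F] [InnerProductSpace 𝕜 F]
    [CompleteSpace F] (f : F → 𝕜) (x : F) : ‖gradient f x‖ = ‖fderiv 𝕜 f x‖ :=
  LinearIsometryEquiv.norm_map _ _

theorem norm_euclideanSpace_proj_le_one {𝕜 ι : Type*} [RCLike 𝕜] [Fintype ι] (i : ι) :
    ‖(EuclideanSpace.proj i : EuclideanSpace 𝕜 ι →L[𝕜] 𝕜)‖ ≤ 1 :=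
  ContinuousLinearMap.opNorm_le_bound _ zero_le_one fun x => by
    simpa only [one_mul, EuclideanSpace.coe_proj] using PiLp.norm_apply_le x i

section JapaneseBracket

variable {d : ℕ}

theorem one_le_jap (x : E d) : 1 ≤ jap x :=
  Real.one_le_sqrt.mpr (le_add_of_nonneg_right (sq_nonneg _))

theorem norm_le_jap (x : E d) : ‖x‖ ≤ jap x :=
  Real.le_sqrt_of_sq_le (by linarith)

theorem jap_le_one_add_norm (x : E d) : jap x ≤ 1 + ‖x‖ :=
  sqrt_one_add_norm_sq_le x

theorem one_le_japr (t : ℝ) : 1 ≤ japr t :=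
  Real.one_le_sqrt.mpr (le_add_of_nonneg_right (sq_nonneg _))

theorem abs_le_japr (t : ℝ) : |t| ≤ japr t :=
  Real.abs_le_sqrt (by linarith)

theorem japr_le_one_add_abs (t : ℝ) : japr t ≤ 1 + |t| := by
  simpa only [japr, Real.norm_eq_abs, sq_abs] using sqrt_one_add_norm_sq_le t

theorem jap_le_mul_japr {r B t : ℝ} {x : E d} (hx : ‖x‖ ≤ r + B * |t|) :
    jap x ≤ (1 + |r| + |B|) * japr t := by
  have hB : B * |t| ≤ |B| * japr t :=
    mul_le_mul (le_abs_self B) (abs_le_japr t) (abs_nonneg t) (abs_nonneg B)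
  have hr : 1 + r ≤ (1 + |r|) * japr t :=
    (add_le_add_right (le_abs_self r) 1).trans
      (le_mul_of_one_le_right (by positivity) (one_le_japr t))
  linarith [jap_le_one_add_norm x]

theorem japr_le_mul_jap {c C t : ℝ} {x : E d} (hc : 0 < c) (hx : c * |t| - C ≤ ‖x‖) :
    japr t ≤ (1 + (1 + |C|) / c) * jap x := by
  have hC : C ≤ |C| * jap x :=
    (le_abs_self C).trans (le_mul_of_one_le_right (abs_nonneg C) (one_le_jap x))
  have ht : |t| ≤ (1 + |C|) / c * jap x := by
    rw [div_mul_eq_mul_div, le_div_iff₀ hc]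
    linarith [norm_le_jap x]
  linarith [japr_le_one_add_abs t, one_le_jap x]

theorem exists_jap_rpow_le_mul_japr_rpow {c : ℝ} (hc : 0 < c) (C r B s : ℝ) :
    ∃ K > 0, ∀ (x : E d) (t : ℝ), c * |t| - C ≤ ‖x‖ → ‖x‖ ≤ r + B * |t| →
      jap x ^ s ≤ K * japr t ^ s := by
  set K : ℝ := max (1 + |r| + |B|) (1 + (1 + |C|) / c)
  have : 0 < K := lt_max_of_lt_left (by positivity)
  refine ⟨K ^ |s|, by positivity, fun x t hlow hup => ?_⟩
  have hx : 0 < jap x := zero_lt_one.trans_le (one_le_jap x)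
  have ht : 0 < japr t := zero_lt_one.trans_le (one_le_japr t)
  refine rpow_le_rpow_abs_mul_rpow hx ht ((jap_le_mul_japr hup).trans ?_)
    ((japr_le_mul_jap hc hlow).trans ?_) s
  · gcongr
    exact le_max_left _ _
  · gcongr
    exact le_max_right _ _

theorem one_div_sq_le_div_japr_sq {l t T : ℝ} (hl : 1 ≤ l) (ht : |t| ≤ l * T) :
    1 / l ^ 2 ≤ (1 + T) ^ 2 / japr t ^ 2 := by
  have : 0 < l := zero_lt_one.trans_le hl
  have ht₀ : 0 < japr t := zero_lt_one.trans_le (one_le_japr t)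
  have hjapr : japr t ≤ (1 + T) * l := by linarith [japr_le_one_add_abs t]
  rw [div_le_div_iff₀ (by positivity) (by positivity), one_mul, ← mul_pow]
  gcongr

end JapaneseBracket

section Hamiltonian

variable {d : ℕ}

theorem hasFDerivAt_kk_momentum (a : Fin d → Fin d → E d → ℝ) (x ξ : E d) :
    HasFDerivAt (kk a x)
      ((1 / 2 : ℝ) • ∑ m : Fin d, ∑ n : Fin d,
        ((a m n x * ξ m) • (EuclideanSpace.proj n : E d →L[ℝ] ℝ) +
          ξ n • a m n x • (EuclideanSpace.proj m : E d →L[ℝ] ℝ))) ξ := by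
  have hproj (i : Fin d) :
      HasFDerivAt (fun ζ : E d => ζ i) (EuclideanSpace.proj i : E d →L[ℝ] ℝ) ξ :=
    (EuclideanSpace.proj i : E d →L[ℝ] ℝ).hasFDerivAt
  exact (HasFDerivAt.fun_sum fun m _ => HasFDerivAt.fun_sum fun n _ =>
    ((hproj m).const_mul _).mul (hproj n)).const_mul _

theorem hasFDerivAt_kk_position {a : Fin d → Fin d → E d → ℝ} {x : E d}
    (ha : ∀ m n, DifferentiableAt ℝ (a m n) x) (ξ : E d) :
    HasFDerivAt (fun z => kk a z ξ)
      ((1 / 2 : ℝ) • ∑ m : Fin d, ∑ n : Fin d, ξ n • ξ m • fderiv ℝ (a m n) x) x :=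
  (HasFDerivAt.fun_sum fun m _ => HasFDerivAt.fun_sum fun n _ =>
    ((ha m n).hasFDerivAt.mul_const _).mul_const _).const_mul _

theorem norm_fderiv_kk_momentum_le (a : Fin d → Fin d → E d → ℝ) (x ξ : E d) :
    ‖fderiv ℝ (kk a x) ξ‖ ≤ (∑ m, ∑ n, |a m n x|) * ‖ξ‖ := by
  have hterm (m n : Fin d) :
      ‖(a m n x * ξ m) • (EuclideanSpace.proj n : E d →L[ℝ] ℝ) +
        ξ n • a m n x • (EuclideanSpace.proj m : E d →L[ℝ] ℝ)‖ ≤ 2 * (|a m n x| * ‖ξ‖) :=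
    calc _ ≤ |a m n x| * ‖ξ m‖ * ‖(EuclideanSpace.proj n : E d →L[ℝ] ℝ)‖ +
          ‖ξ n‖ * (|a m n x| * ‖(EuclideanSpace.proj m : E d →L[ℝ] ℝ)‖) := by
          refine (norm_add_le _ _).trans_eq ?_
          simp only [norm_smul, norm_mul, Real.norm_eq_abs]
      _ ≤ |a m n x| * ‖ξ‖ * 1 + ‖ξ‖ * (|a m n x| * 1) := by
          gcongr <;> first | exact PiLp.norm_apply_le ξ _ | exact norm_euclideanSpace_proj_le_one _
      _ = 2 * (|a m n x| * ‖ξ‖) := by ring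
  rw [(hasFDerivAt_kk_momentum a x ξ).fderiv, norm_smul, Real.norm_of_nonneg one_half_pos.le]
  calc _ ≤ 1 / 2 * ∑ m, ∑ n, 2 * (|a m n x| * ‖ξ‖) := by
        gcongr
        exact norm_sum_le_of_le _ fun m _ => norm_sum_le_of_le _ fun n _ => hterm m n
    _ = (∑ m, ∑ n, |a m n x|) * ‖ξ‖ := by
        simp only [← Finset.mul_sum, ← Finset.sum_mul]
        ring

theorem norm_fderiv_kk_position_le {a : Fin d → Fin d → E d → ℝ} {x : E d}
    (ha : ∀ m n, DifferentiableAt ℝ (a m n) x) (ξ : E d) :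
    ‖fderiv ℝ (fun z => kk a z ξ) x‖ ≤ 1 / 2 * (∑ m, ∑ n, ‖fderiv ℝ (a m n) x‖) * ‖ξ‖ ^ 2 := by
  have hterm (m n : Fin d) :
      ‖ξ n • ξ m • fderiv ℝ (a m n) x‖ ≤ ‖fderiv ℝ (a m n) x‖ * ‖ξ‖ ^ 2 :=
    calc _ = ‖ξ n‖ * (‖ξ m‖ * ‖fderiv ℝ (a m n) x‖) := by rw [norm_smul, norm_smul]
      _ ≤ ‖ξ‖ * (‖ξ‖ * ‖fderiv ℝ (a m n) x‖) := by
          gcongr <;> exact PiLp.norm_apply_le ξ _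
      _ = ‖fderiv ℝ (a m n) x‖ * ‖ξ‖ ^ 2 := by ring
  rw [(hasFDerivAt_kk_position ha ξ).fderiv, norm_smul, Real.norm_of_nonneg one_half_pos.le,
    mul_assoc]
  gcongr
  simp only [Finset.sum_mul]
  exact norm_sum_le_of_le _ fun m _ => norm_sum_le_of_le _ fun n _ => hterm m n

/-- The rescaled Hamiltonian `p^λ(x, ξ) = k(x, ξ) + λ⁻² V(x)`, whose flow is estimated here; `l`
stands for `λ`. -/
def rescaledHamiltonian (a : Fin d → Fin d → E d → ℝ) (V : E d → ℝ) (l : ℝ) (x ξ : E d) : ℝ :=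
  kk a x ξ + 1 / l ^ 2 * V x

variable {a : Fin d → Fin d → E d → ℝ} {V : E d → ℝ} {l : ℝ} {y η : ℝ → E d}

theorem IsHamiltonSol.norm_position_le {A M τ t : ℝ}
    (h : IsHamiltonSol (rescaledHamiltonian a V l) y η) (hA : ∀ x, ∑ m, ∑ n, |a m n x| ≤ A)
    (hM : ∀ s, |s| ≤ τ → ‖η s‖ ≤ M) (ht : |t| ≤ τ) : ‖y t‖ ≤ ‖y 0‖ + A * M * |t| := by
  have hA_nonneg : 0 ≤ A := le_trans (by positivity) (hA (y t))
  refine norm_le_norm_zero_add_mul_abs (fun s _ => (h s).1) (fun s hs => ?_) ht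
  calc ‖gradient (rescaledHamiltonian a V l (y s)) (η s)‖ = ‖fderiv ℝ (kk a (y s)) (η s)‖ := by
        rw [norm_gradient]
        exact congrArg norm (fderiv_add_const _)
    _ ≤ (∑ m, ∑ n, |a m n (y s)|) * ‖η s‖ := norm_fderiv_kk_momentum_le _ _ _
    _ ≤ A * M := mul_le_mul (hA _) (hM s hs) (norm_nonneg _) hA_nonneg

theorem IsHamiltonSol.norm_deriv_momentum_le (h : IsHamiltonSol (rescaledHamiltonian a V l) y η)
    {t : ℝ} (ha : ∀ m n, DifferentiableAt ℝ (a m n) (y t)) (hV : DifferentiableAt ℝ V (y t)) :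
    ‖deriv η t‖ ≤ 1 / 2 * (∑ m, ∑ n, ‖fderiv ℝ (a m n) (y t)‖) * ‖η t‖ ^ 2 +
      1 / l ^ 2 * ‖fderiv ℝ V (y t)‖ := by
  have hfderiv : fderiv ℝ (fun x => rescaledHamiltonian a V l x (η t)) (y t) =
      fderiv ℝ (fun x => kk a x (η t)) (y t) + (1 / l ^ 2) • fderiv ℝ V (y t) :=
    ((hasFDerivAt_kk_position ha _).differentiableAt.hasFDerivAt.add
      (hV.hasFDerivAt.const_mul _)).fderiv
  rw [(h t).2.deriv, norm_neg, norm_gradient, hfderiv]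
  refine (norm_add_le _ _).trans (add_le_add (norm_fderiv_kk_position_le ha _) ?_)
  rw [norm_smul, Real.norm_of_nonneg (by positivity)]

end Hamiltonian

/-- The part of Assumption C that governs the first-order estimates on the flow: bounded
coefficients with `∂a = O(⟨x⟩^{-1-μ})` and a potential with `∇V = O(⟨x⟩^{1-μ})`. -/
structure FirstOrderBounds {d : ℕ} (μ : ℝ) (a : Fin d → Fin d → E d → ℝ) (V : E d → ℝ) :
    Prop where
  differentiable_coeff : ∀ m n, Differentiable ℝ (a m n)
  differentiable_potential : Differentiable ℝ V
  abs_coeff_le : ∀ m n, ∃ C > 0, ∀ x, |a m n x| ≤ C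
  norm_fderiv_coeff_le : ∀ m n, ∃ C > 0, ∀ x, ‖fderiv ℝ (a m n) x‖ ≤ C * jap x ^ (-1 - μ)
  norm_fderiv_potential_le : ∃ C > 0, ∀ x, ‖fderiv ℝ V x‖ ≤ C * jap x ^ (1 - μ)

namespace AssumptionC

variable {d : ℕ} {μ ν : ℝ} {a : Fin d → Fin d → E d → ℝ} {VL VS : E d → ℝ}

theorem exists_abs_coeff_le (h : AssumptionC μ ν a VL VS) (hμ : 0 ≤ μ) (m n : Fin d) :
    ∃ C > 0, ∀ x, |a m n x| ≤ C := by
  obtain ⟨-, -, -, hsymbol, -⟩ := h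
  obtain ⟨C, hC, hbound⟩ := hsymbol m n 0
  refine ⟨C + 1, by positivity, fun x => ?_⟩
  set δ : ℝ := if m = n then 1 else 0 with hδ_def
  have hδ : |δ| ≤ 1 := by rw [hδ_def]; split_ifs <;> norm_num
  have hdecay : jap x ^ (-μ - ((0 : ℕ) : ℝ)) ≤ 1 :=
    Real.rpow_le_one_of_one_le_of_nonpos (one_le_jap x) (by rw [Nat.cast_zero]; linarith)
  have hsub : |a m n x - δ| ≤ C := by
    simpa only [norm_iteratedFDeriv_zero, Real.norm_eq_abs] using
      (hbound x).trans (mul_le_of_le_one_right hC.le hdecay)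
  linarith [abs_sub_abs_le_abs_sub (a m n x) δ]

theorem exists_norm_fderiv_coeff_le (h : AssumptionC μ ν a VL VS) (m n : Fin d) :
    ∃ C > 0, ∀ x, ‖fderiv ℝ (a m n) x‖ ≤ C * jap x ^ (-1 - μ) := by
  obtain ⟨-, -, -, hsymbol, -⟩ := h
  obtain ⟨C, hC, hbound⟩ := hsymbol m n 1
  have hexp : -μ - ((1 : ℕ) : ℝ) = -1 - μ := by rw [Nat.cast_one]; ring
  refine ⟨C, hC, fun x => ?_⟩
  simpa only [norm_iteratedFDeriv_one, fderiv_sub_const, hexp] using hbound x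

theorem exists_norm_fderiv_potential_le (h : AssumptionC μ ν a VL VS) (hμν : μ ≤ ν) :
    ∃ C > 0, ∀ x, ‖fderiv ℝ (fun z => VL z + VS z) x‖ ≤ C * jap x ^ (1 - μ) := by
  have hexp (κ : ℝ) : 2 - κ - ((1 : ℕ) : ℝ) = 1 - κ := by rw [Nat.cast_one]; ring
  obtain ⟨-, -, -, -, hVL, hVS, hlong, hshort⟩ := h
  obtain ⟨CL, hCL, hL⟩ := hlong 1
  obtain ⟨CS, hCS, hS⟩ := hshort 1
  refine ⟨CL + CS, by positivity, fun x => ?_⟩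
  rw [fderiv_fun_add (hVL.differentiable (by simp) x) (hVS.differentiable (by simp) x)]
  calc ‖fderiv ℝ VL x + fderiv ℝ VS x‖ ≤ ‖fderiv ℝ VL x‖ + ‖fderiv ℝ VS x‖ := norm_add_le _ _
    _ ≤ CL * jap x ^ (1 - μ) + CS * jap x ^ (1 - ν) := by
        simpa only [norm_iteratedFDeriv_one, hexp] using add_le_add (hL x) (hS x)
    _ ≤ CL * jap x ^ (1 - μ) + CS * jap x ^ (1 - μ) := by
        gcongr
        exact one_le_jap x
    _ = (CL + CS) * jap x ^ (1 - μ) := (add_mul _ _ _).symm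

theorem firstOrderBounds (h : AssumptionC μ ν a VL VS) (hμ : 0 ≤ μ) (hμν : μ ≤ ν) :
    FirstOrderBounds μ a (fun z => VL z + VS z) where
  differentiable_coeff m n := (h.1 m n).differentiable (by simp)
  differentiable_potential :=
    have ⟨_, _, _, _, hVL, hVS, _⟩ := h
    (hVL.differentiable (by simp)).add (hVS.differentiable (by simp))
  abs_coeff_le := h.exists_abs_coeff_le hμ
  norm_fderiv_coeff_le := h.exists_norm_fderiv_coeff_le
  norm_fderiv_potential_le := h.exists_norm_fderiv_potential_le hμν

end AssumptionC

theorem stmt11_general {d : ℕ} {μ : ℝ} {a : Fin d → Fin d → E d → ℝ} {V : E d → ℝ}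
    (hb : FirstOrderBounds μ a V) {T c : ℝ} (hT : 0 ≤ T) (hc : 0 < c) (r C M : ℝ) :
    ∃ C' > 0, ∀ l : ℝ, 1 ≤ l → ∀ y η : ℝ → E d,
      IsHamiltonSol (rescaledHamiltonian a V l) y η → ‖y 0‖ ≤ r →
      (∀ t, |t| ≤ l * T → c * |t| - C ≤ ‖y t‖ ∧ ‖η t‖ ≤ M) →
      ∀ t, |t| ≤ l * T → ‖deriv η t‖ ≤ C' * japr t ^ (-1 - μ) := by
  obtain ⟨A₀, -, hA₀⟩ := exists_nonneg_forall_sum_sum_le (g := 1) (by simpa using hb.abs_coeff_le)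
  obtain ⟨A₁, hA₁_nonneg, hA₁⟩ := exists_nonneg_forall_sum_sum_le hb.norm_fderiv_coeff_le
  obtain ⟨B, hB_pos, hB⟩ := hb.norm_fderiv_potential_le
  obtain ⟨K₁, hK₁_pos, hK₁⟩ :=
    exists_jap_rpow_le_mul_japr_rpow (d := d) hc C r (A₀ * M) (-1 - μ)
  obtain ⟨K₂, hK₂_pos, hK₂⟩ := exists_jap_rpow_le_mul_japr_rpow (d := d) hc C r (A₀ * M) (1 - μ)
  refine ⟨1 / 2 * (A₁ * K₁) * M ^ 2 + (1 + T) ^ 2 * (B * K₂), by positivity,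
    fun l hl y η hsol hy₀ hbd t ht => ?_⟩
  have hup : ‖y t‖ ≤ r + A₀ * M * |t| :=
    (hsol.norm_position_le (by simpa using hA₀) (fun s hs => (hbd s hs).2) ht).trans (by gcongr)
  obtain ⟨hlow, hM⟩ := hbd t ht
  have ht₀ : 0 < japr t := zero_lt_one.trans_le (one_le_japr t)
  have hcoeff : ∑ m, ∑ n, ‖fderiv ℝ (a m n) (y t)‖ ≤ A₁ * (K₁ * japr t ^ (-1 - μ)) :=
    (hA₁ _).trans (mul_le_mul_of_nonneg_left (hK₁ _ _ hlow hup) hA₁_nonneg)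
  have hpotential : ‖fderiv ℝ V (y t)‖ ≤ B * (K₂ * japr t ^ (1 - μ)) :=
    (hB _).trans (mul_le_mul_of_nonneg_left (hK₂ _ _ hlow hup) hB_pos.le)
  have htime : 1 / l ^ 2 ≤ (1 + T) ^ 2 / japr t ^ 2 := one_div_sq_le_div_japr_sq hl ht
  calc ‖deriv η t‖
      ≤ 1 / 2 * (∑ m, ∑ n, ‖fderiv ℝ (a m n) (y t)‖) * ‖η t‖ ^ 2 +
          1 / l ^ 2 * ‖fderiv ℝ V (y t)‖ :=
        hsol.norm_deriv_momentum_le (fun m n => hb.differentiable_coeff m n _)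
          (hb.differentiable_potential _)
    _ ≤ 1 / 2 * (A₁ * (K₁ * japr t ^ (-1 - μ))) * M ^ 2 +
          (1 + T) ^ 2 / japr t ^ 2 * (B * (K₂ * japr t ^ (1 - μ))) := by
        gcongr
    _ = (1 / 2 * (A₁ * K₁) * M ^ 2 + (1 + T) ^ 2 * (B * K₂)) * japr t ^ (-1 - μ) := by
        have hpow : japr t ^ (-1 - μ) = japr t ^ (1 - μ) / japr t ^ 2 := by
          rw [← Real.rpow_sub_natCast ht₀.ne']
          congr 1
          push_cast
          ring
        rw [hpow]
        ring

/-- Uniform momentum-derivative estimate for the rescaled flow. -/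
theorem stmt11 (d : ℕ) (hd : 1 ≤ d) (μ ν : ℝ) (hμ : 1 / 2 < μ) (hμ1 : μ ≤ 1) (hν : 1 < ν)
    (a : Fin d → Fin d → E d → ℝ) (VL VS : E d → ℝ) (hAC : AssumptionC μ ν a VL VS)
    (T : ℝ) (hT : 0 < T)
    (X Ξ : ℝ → ℝ → E d) (x0 ξ0 : E d) (hξ0 : ξ0 ≠ 0)
    (hHam : ∀ l : ℝ, 1 ≤ l →
      IsHamiltonSol (fun z ζ => kk a z ζ + (1 / l ^ 2) * (VL z + VS z)) (X l) (Ξ l) ∧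
        X l 0 = x0 ∧ Ξ l 0 = ξ0)
    (lam0 c C M : ℝ) (hlam0 : 1 ≤ lam0) (hc : 0 < c) (hC : 0 < C) (hM : 0 < M)
    (hbd : ∀ l : ℝ, lam0 ≤ l → ∀ t : ℝ, |t| ≤ l * T →
      c * |t| - C ≤ ‖X l t‖ ∧ ‖Ξ l t‖ ≤ M) :
    ∃ C' > 0, ∀ l : ℝ, lam0 ≤ l → ∀ t : ℝ, |t| ≤ l * T →
      ‖deriv (Ξ l) t‖ ≤ C' * japr t ^ (-1 - μ) := by
  obtain ⟨C', hC', hbound⟩ :=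
    stmt11_general (hAC.firstOrderBounds (by linarith) (by linarith)) hT.le hc ‖x0‖ C M
  exact ⟨C', hC', fun l hl => have ⟨hsol, hX0, _⟩ := hHam l (hlam0.trans hl)
    hbound l (hlam0.trans hl) _ _ hsol (hX0 ▸ le_rfl) (hbd l hl)⟩
end
end

section
/- (Remainder estimate for potentials homogeneous of degree 1, from the proof of Theorem 4) Let V^{(L)} ∈ C^∞(ℝ^d;ℝ) satisfy V^{(L)}(x) = |x|·V^{(L)}(x/|x|) for all |x| ≥ 1. Fix t > 0 and define F(t,ξ) = ∫₀ᵗ V^{(L)}(sξ) ds − (t²/2)·V^{(L)}(ξ). Then for every multi-index α ∈ ℤ₊^d there is C_α > 0 such that |∂_ξ^α F(t,ξ)| ≤ C_α ⟨ξ⟩^{−1−|α|} for all ξ ∈ ℝ^d. -/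
open Filter MeasureTheory
open scoped Topology BigOperators

noncomputable section

/-!
Let `V` be positively homogeneous of degree `m ≠ -1` far from the origin, and consider the defect
`∫₀ᵗ V(sξ) ds - t^(m+1)/(m+1) • V(ξ)`. Substituting `s ↦ s / c` in the integral at `cξ` and
integrating the power `s^m` over the part of the ray where `V` is homogeneous shows that the defect
is homogeneous of degree `-1` far from the origin, whatever `m` is. Each derivative lowers the
degree by one, and a continuous function that is homogeneous of degree `p` far from the origin is
controlled, by compactness of a sphere, by the `p`-th power of the Japanese bracket.
-/

open Asymptotics Bornology

/-- Positive homogeneity of degree `p` outside the closed ball of radius `R` about the origin. The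
dilation may be expanding or contracting, as long as both points lie outside the ball. -/
def IsHomogeneousOutside {X G : Type*} [NormedAddCommGroup X] [NormedSpace ℝ X]
    [NormedAddCommGroup G] [NormedSpace ℝ G] (p R : ℝ) (f : X → G) : Prop :=
  ∀ ⦃x : X⦄ ⦃c : ℝ⦄, 0 < c → R < ‖x‖ → R < ‖c • x‖ → f (c • x) = c ^ p • f x

/-- The defect of `V` from satisfying `∫₀ᵗ V(sx) ds = t^(m+1)/(m+1) • V(x)`, an identity which holds
for `m > -1` when `V` is positively homogeneous of degree `m` on the whole space. For `m = -1` the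
coefficient is the junk value `t^0/0 = 0`. -/
def rayIntegralDefect {X G : Type*} [NormedAddCommGroup X] [NormedSpace ℝ X]
    [NormedAddCommGroup G] [NormedSpace ℝ G] (m t : ℝ) (V : X → G) (x : X) : G :=
  (∫ s in (0 : ℝ)..t, V (s • x)) - (t ^ (m + 1) / (m + 1)) • V x

section ParametricIntegral

variable {X G : Type*} [NormedAddCommGroup X] [NormedSpace ℝ X]
  [NormedAddCommGroup G] [NormedSpace ℝ G] {f : ℝ → X → G}

theorem hasFDerivAt_intervalIntegral_of_contDiff [ProperSpace X] (hf : ContDiff ℝ 1 f.uncurry)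
    (a b : ℝ) (x : X) :
    HasFDerivAt (fun y => ∫ s in a..b, f s y) (∫ s in a..b, fderiv ℝ (f s) x) x := by
  have hf' : Continuous fun p : ℝ × X => fderiv ℝ (f p.1) p.2 :=
    Continuous.fderiv (f := fun p : ℝ × X => f p.1) (n := 1)
      (hf.comp (contDiff_fst.fst.prodMk contDiff_snd)) continuous_snd (by simp)
  have hcont (y : X) : Continuous fun s => f s y := hf.continuous.comp (.prodMk_left y)
  obtain ⟨C, hC⟩ := ((isCompact_uIcc (a := a) (b := b)).prod
    (isCompact_closedBall x 1)).exists_bound_of_continuousOn hf'.continuousOn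
  refine intervalIntegral.hasFDerivAt_integral_of_dominated_of_fderiv_le
    (F' := fun y s => fderiv ℝ (f s) y) (bound := fun _ => C)
    (Metric.closedBall_mem_nhds x one_pos)
    (.of_forall fun y => (hcont y).aestronglyMeasurable)
    ((hcont x).intervalIntegrable _ _)
    (hf'.comp (by fun_prop : Continuous fun s : ℝ => (s, x))).aestronglyMeasurable
    (.of_forall fun s hs y hy => hC (s, y) ⟨Set.uIoc_subset_uIcc hs, hy⟩)
    intervalIntegrable_const (.of_forall fun s _ y _ => ?_)
  have hfs : ContDiff ℝ 1 (f s) := hf.comp (contDiff_const.prodMk contDiff_id)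
  exact (hfs.differentiable one_ne_zero y).hasFDerivAt

theorem contDiff_intervalIntegral [FiniteDimensional ℝ X] {n : ℕ} (hf : ContDiff ℝ n f.uncurry)
    (a b : ℝ) : ContDiff ℝ n fun x => ∫ s in a..b, f s x := by
  induction n generalizing f with
  | zero =>
    rw [Nat.cast_zero, contDiff_zero] at hf ⊢
    exact intervalIntegral.continuous_parametric_intervalIntegral_of_continuous'
      (f := fun x s => f s x) (hf.comp continuous_swap) a b
  | succ n ih =>
    have hderiv := hasFDerivAt_intervalIntegral_of_contDiff (hf.of_le (by simp)) a b
    have hf' : ContDiff ℝ n fun p : ℝ × X => fderiv ℝ (f p.1) p.2 :=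
      ContDiff.fderiv (f := fun p : ℝ × X => f p.1)
        (hf.comp (contDiff_fst.fst.prodMk contDiff_snd)) contDiff_snd (by simp)
    rw [Nat.cast_succ, contDiff_succ_iff_fderiv_apply]
    refine ⟨fun x => (hderiv x).differentiableAt, by simp, fun y => ?_⟩
    have hint (x : X) : IntervalIntegrable (fun s => fderiv ℝ (f s) x) volume a b :=
      (hf'.continuous.comp (by fun_prop : Continuous fun s : ℝ => (s, x))).intervalIntegrable _ _
    simp only [(hderiv _).fderiv, ContinuousLinearMap.intervalIntegral_apply (hint _)]
    exact ih (hf'.clm_apply contDiff_const)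

end ParametricIntegral

theorem exists_norm_le_mul_of_isBigO_cocompact {Z Y : Type*} [TopologicalSpace Z]
    [SeminormedAddCommGroup Y] [NormedSpace ℝ Y] {f : Z → Y} {g : Z → ℝ} (hf : Continuous f)
    (hg : Continuous g) (hg_pos : ∀ x, 0 < g x) (hfg : f =O[cocompact Z] g) :
    ∃ C > 0, ∀ x, ‖f x‖ ≤ C * g x := by
  have hquot : (fun x => (g x)⁻¹ • f x) =O[cocompact Z] (1 : Z → ℝ) :=
    ((isBigO_refl (fun x => (g x)⁻¹) _).smul hfg).congr_right
      fun x => inv_mul_cancel₀ (hg_pos x).ne'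
  have hbdd := ((hg.inv₀ fun x => (hg_pos x).ne').smul hf).isBounded_range_iff_isBigO.2 hquot
  obtain ⟨C, hC, hle⟩ := hbdd.exists_pos_norm_le
  refine ⟨C, hC, fun x => ?_⟩
  have hx : ‖(g x)⁻¹ • f x‖ ≤ C := hle _ (Set.mem_range_self x)
  rwa [norm_smul_of_nonneg (inv_nonneg.2 (hg_pos x).le), inv_mul_le_iff₀ (hg_pos x),
    mul_comm] at hx

theorem isTheta_norm_sqrt_one_add_norm_sq {X : Type*} [NormedAddCommGroup X] :
    (fun x : X => ‖x‖) =Θ[cobounded X] fun x => √(1 + ‖x‖ ^ 2) := by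
  refine ⟨.of_norm_le fun x => ?_, .of_bound 2 ?_⟩
  · rw [norm_norm]
    exact Real.le_sqrt_of_sq_le (by linarith)
  · filter_upwards [eventually_cobounded_le_norm 1] with x hx
    rw [norm_norm, Real.norm_of_nonneg (Real.sqrt_nonneg _)]
    linarith [sqrt_one_add_norm_sq_le x]

namespace IsHomogeneousOutside

variable {X G : Type*} [NormedAddCommGroup X] [NormedSpace ℝ X]
  [NormedAddCommGroup G] [NormedSpace ℝ G] {f V : X → G} {m p R t : ℝ}

theorem of_eq_norm_rpow_smul (h : ∀ x, 1 ≤ ‖x‖ → f x = ‖x‖ ^ p • f (‖x‖⁻¹ • x)) :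
    IsHomogeneousOutside p 1 f := by
  intro x c hc hx hcx
  have hnorm : ‖c • x‖ = c * ‖x‖ := norm_smul_of_nonneg hc.le x
  have hdir : (c * ‖x‖)⁻¹ * c = ‖x‖⁻¹ := by field_simp
  rw [h _ hcx.le, h x hx.le, hnorm, smul_smul, smul_smul, hdir,
    Real.mul_rpow hc.le (norm_nonneg x)]

protected theorem iteratedFDeriv {n : ℕ} (hf : IsHomogeneousOutside p R f)
    (hf_smooth : ContDiff ℝ n f) :
    IsHomogeneousOutside (p - n) R (iteratedFDeriv ℝ n f) := by
  intro x c hc hx hcx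
  have hev : (fun y => f (c • y)) =ᶠ[𝓝 x] c ^ p • f := by
    filter_upwards [continuous_norm.continuousAt.eventually_const_lt hx,
      (continuous_const_smul c).norm.continuousAt.eventually_const_lt hcx] with y hy hcy
    exact hf hc hy hcy
  have hderiv : c ^ n • iteratedFDeriv ℝ n f (c • x) = c ^ p • iteratedFDeriv ℝ n f x := by
    rw [← iteratedFDeriv_const_smul_apply (a := c ^ p) hf_smooth.contDiffAt,
      ← (hev.iteratedFDeriv ℝ n).eq_of_nhds, iteratedFDeriv_comp_const_smul c hf_smooth]
  rw [Real.rpow_sub_natCast hc.ne', div_eq_inv_mul, mul_smul, ← hderiv,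
    inv_smul_smul₀ (pow_ne_zero n hc.ne')]

theorem isBigO_norm_rpow [ProperSpace X] (hf : IsHomogeneousOutside p R f)
    (hf_cont : Continuous f) : f =O[cobounded X] fun x => ‖x‖ ^ p := by
  set r : ℝ := |R| + 1
  have hr : 0 < r := by positivity
  have hRr : R < r := (le_abs_self R).trans_lt (lt_add_one _)
  obtain ⟨M, hM⟩ := (isCompact_sphere (0 : X) r).exists_bound_of_continuousOn hf_cont.continuousOn
  refine .of_bound (M / r ^ p) ?_
  filter_upwards [eventually_cobounded_le_norm r] with x hx
  have hx_pos : 0 < ‖x‖ := hr.trans_le hx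
  have hc : 0 < r / ‖x‖ := div_pos hr hx_pos
  have hproj : ‖(r / ‖x‖) • x‖ = r := by
    rw [norm_smul_of_nonneg hc.le, div_mul_cancel₀ r hx_pos.ne']
  have hbound : r ^ p / ‖x‖ ^ p * ‖f x‖ ≤ M := by
    have := hM _ (mem_sphere_zero_iff_norm.2 hproj)
    rwa [hf hc (hRr.trans_le hx) (hRr.trans_eq hproj.symm), norm_smul_of_nonneg (by positivity),
      Real.div_rpow hr.le hx_pos.le] at this
  rw [Real.norm_of_nonneg (by positivity)]
  calc ‖f x‖ = r ^ p / ‖x‖ ^ p * ‖f x‖ / r ^ p * ‖x‖ ^ p := by field_simp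
    _ ≤ M / r ^ p * ‖x‖ ^ p := by gcongr

theorem exists_norm_le_mul_sqrt_rpow [ProperSpace X] (hf : IsHomogeneousOutside p R f)
    (hf_cont : Continuous f) : ∃ C > 0, ∀ x, ‖f x‖ ≤ C * √(1 + ‖x‖ ^ 2) ^ p := by
  have hbracket (x : X) : 0 < √(1 + ‖x‖ ^ 2) := by positivity
  have hnorm_rpow := isTheta_norm_sqrt_one_add_norm_sq (X := X).rpow (r := p)
    (.of_forall fun x => norm_nonneg x) (.of_forall fun x => (hbracket x).le)
  refine exists_norm_le_mul_of_isBigO_cocompact hf_cont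
    ((by fun_prop : Continuous fun x : X => √(1 + ‖x‖ ^ 2)).rpow_const
      fun x => .inl (hbracket x).ne')
    (fun x => Real.rpow_pos_of_pos (hbracket x) p) ?_
  rw [← Metric.cobounded_eq_cocompact]
  exact (hf.isBigO_norm_rpow hf_cont).trans hnorm_rpow.isBigO

theorem intervalIntegral_comp_smul [CompleteSpace G] (hV : IsHomogeneousOutside m R V)
    (hm : m ≠ -1) {a b : ℝ} (ha : 0 < a) (hb : 0 < b) {x : X} (hx : R < ‖x‖) (hax : R < ‖a • x‖)
    (hbx : R < ‖b • x‖) :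
    ∫ s in a..b, V (s • x) = ((b ^ (m + 1) - a ^ (m + 1)) / (m + 1)) • V x := by
  have hmin : 0 < min a b := lt_min ha hb
  rw [norm_smul_of_nonneg ha.le] at hax
  rw [norm_smul_of_nonneg hb.le] at hbx
  have hminx : R < min a b * ‖x‖ := by
    rw [min_mul_of_nonneg a b (norm_nonneg x)]
    exact lt_min hax hbx
  calc ∫ s in a..b, V (s • x) = ∫ s in a..b, s ^ m • V x := by
        refine intervalIntegral.integral_congr fun s hs => ?_
        have hs_pos : 0 < s := hmin.trans_le hs.1
        refine hV hs_pos hx (hminx.trans_le ?_)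
        rw [norm_smul_of_nonneg hs_pos.le]
        exact mul_le_mul_of_nonneg_right hs.1 (norm_nonneg x)
    _ = ((b ^ (m + 1) - a ^ (m + 1)) / (m + 1)) • V x := by
        rw [intervalIntegral.integral_smul_const,
          integral_rpow (.inr ⟨hm, fun h => hmin.not_ge h.1⟩)]

protected theorem rayIntegralDefect [CompleteSpace G] (hV : IsHomogeneousOutside m R V)
    (hm : m ≠ -1) (hV_cont : Continuous V) (ht : 0 < t) :
    IsHomogeneousOutside (-1) (max R (R / t)) (rayIntegralDefect m t V) := by
  intro x c hc hx hcx
  obtain ⟨hRx, hRtx⟩ := max_lt_iff.1 hx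
  obtain ⟨hRcx, hRtcx⟩ := max_lt_iff.1 hcx
  have htx : R < ‖t • x‖ := by rwa [norm_smul_of_nonneg ht.le, ← div_lt_iff₀' ht]
  have htcx : R < ‖(t * c) • x‖ := by
    rwa [mul_smul, norm_smul_of_nonneg ht.le, ← div_lt_iff₀' ht]
  have hm' : m + 1 ≠ 0 := fun h => hm (eq_neg_of_add_eq_zero_left h)
  have hcont : Continuous fun s : ℝ => V (s • x) := by fun_prop
  have hsubst : ∫ s in (0 : ℝ)..t, V (s • c • x) = c⁻¹ • ∫ s in (0 : ℝ)..(t * c), V (s • x) := by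
    simpa only [smul_smul, zero_mul] using
      intervalIntegral.integral_comp_mul_right (a := 0) (b := t) (fun s => V (s • x)) hc.ne'
  have hsplit : ∫ s in (0 : ℝ)..(t * c), V (s • x) =
      (∫ s in (0 : ℝ)..t, V (s • x)) +
        (((t * c) ^ (m + 1) - t ^ (m + 1)) / (m + 1)) • V x := by
    rw [← hV.intervalIntegral_comp_smul hm ht (mul_pos ht hc) hRx htx htcx,
      intervalIntegral.integral_add_adjacent_intervals (hcont.intervalIntegrable _ _)
        (hcont.intervalIntegrable _ _)]
  unfold rayIntegralDefect
  rw [hsubst, hsplit, hV hc hRx hRcx, Real.rpow_neg_one, Real.mul_rpow ht.le hc.le,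
    Real.rpow_add_one hc.ne']
  match_scalars <;> field_simp
  ring

end IsHomogeneousOutside

section RayIntegralDefect

variable {X G : Type*} [NormedAddCommGroup X] [NormedSpace ℝ X]
  [NormedAddCommGroup G] [NormedSpace ℝ G] {V : X → G} {m R t : ℝ} {n : ℕ}

theorem rayIntegralDefect_one (V : X → G) :
    rayIntegralDefect 1 t V =
      fun x => (∫ s in (0 : ℝ)..t, V (s • x)) - (t ^ 2 / 2) • V x := by
  ext x
  norm_num [rayIntegralDefect]

theorem contDiff_rayIntegralDefect [FiniteDimensional ℝ X] (hV : ContDiff ℝ n V) :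
    ContDiff ℝ n (rayIntegralDefect m t V) := by
  have hV_smul : ContDiff ℝ n (fun (s : ℝ) (x : X) => V (s • x)).uncurry :=
    hV.comp (contDiff_fst.smul contDiff_snd)
  exact (contDiff_intervalIntegral hV_smul 0 t).sub (hV.const_smul _)

theorem stmt17_general [FiniteDimensional ℝ X] [CompleteSpace G] (hm : m ≠ -1)
    (hV : ContDiff ℝ n V) (hhom : IsHomogeneousOutside m R V) (ht : 0 < t) :
    ∃ C > 0, ∀ ξ : X, ‖iteratedFDeriv ℝ n (rayIntegralDefect m t V) ξ‖
      ≤ C * √(1 + ‖ξ‖ ^ 2) ^ (-1 - (n : ℝ)) := by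
  have hdefect : ContDiff ℝ n (rayIntegralDefect m t V) := contDiff_rayIntegralDefect hV
  have hdefect_hom := hhom.rayIntegralDefect hm hV.continuous ht
  exact (hdefect_hom.iteratedFDeriv hdefect).exists_norm_le_mul_sqrt_rpow
    (hdefect.continuous_iteratedFDeriv le_rfl)

end RayIntegralDefect

/-- Remainder estimate for potentials homogeneous of degree 1 (proof of Theorem 4). -/
theorem stmt17 (d : ℕ) (hd : 1 ≤ d)
    (VL : E d → ℝ) (hVL : ContDiff ℝ (⊤ : ℕ∞) VL)
    (hhom : ∀ x : E d, 1 ≤ ‖x‖ → VL x = ‖x‖ * VL (‖x‖⁻¹ • x))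
    (t : ℝ) (ht : 0 < t) :
    ∀ n : ℕ, ∃ C > 0, ∀ ξ : E d,
      ‖iteratedFDeriv ℝ n
          (fun ξ' => (∫ s in (0 : ℝ)..t, VL (s • ξ')) - t ^ 2 / 2 * VL ξ') ξ‖
        ≤ C * jap ξ ^ (-1 - (n : ℝ)) := by
  intro n
  have hhom' : IsHomogeneousOutside 1 1 VL := .of_eq_norm_rpow_smul (by simpa using hhom)
  simpa only [jap, rayIntegralDefect_one, smul_eq_mul] using
    stmt17_general (n := n) (by norm_num) (hVL.of_le (mod_cast le_top)) hhom' ht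
end
end
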